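/- arXiv:2303.05920 — 4 statements merged into one kernel-verified Lean document; each statement's English description precedes it below -/
import Mathlib

section
/- Let M = (V, I) be a matroid on a finite ground set V with rank function rank (rank(X) is the maximum size of an independent subset of X), let S ∈ I, let u ∈ S, and let A ⊆ V \ S. Then there exists an element v ∈ A with S − u + v ∈ I if and only if rank((S \ {u}) ∪ A) ≥ |S|. -/
/-- A matroid on a finite ground set `V`, given by its family of independent sets. -/
structure FinMatroid (V : Type*) [DecidableEq V] [Fintype V] where
  Indep : Finset V → Prop
  indep_empty : Indep ∅
  indep_subset : ∀ ⦃S T : Finset V⦄, Indep S → T ⊆ S → Indep T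
  indep_aug : ∀ ⦃S T : Finset V⦄, Indep S → Indep T → T.card < S.card →
    ∃ x ∈ S \ T, Indep (insert x T)

/-- The rank of a set `X`: the maximum size of an independent subset of `X`. -/
noncomputable def FinMatroid.rank {V : Type*} [DecidableEq V] [Fintype V]
    (M : FinMatroid V) (X : Finset V) : ℕ :=
  sSup {n : ℕ | ∃ T ⊆ X, M.Indep T ∧ T.card = n}

/-- Correctness criterion of the rank-oracle binary-search procedure `FindInEdge`:
there is `v ∈ A` with `S − u + v` independent iff `rank((S \ {u}) ∪ A) ≥ |S|`. -/
theorem findInEdge_criterion {V : Type*} [DecidableEq V] [Fintype V]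
    (M : FinMatroid V) (S : Finset V) (hS : M.Indep S) (u : V) (hu : u ∈ S)
    (A : Finset V) (hA : ∀ a ∈ A, a ∉ S) :
    (∃ v ∈ A, M.Indep (insert v (S.erase u))) ↔ S.card ≤ M.rank ((S.erase u) ∪ A) := by
  have hbdd : BddAbove {n : ℕ | ∃ T ⊆ S.erase u ∪ A, M.Indep T ∧ T.card = n} := by
    refine ⟨(S.erase u ∪ A).card, ?_⟩
    rintro n ⟨T, hT, -, rfl⟩
    exact Finset.card_le_card hT
  have hpos : 0 < S.card := Finset.card_pos.mpr ⟨u, hu⟩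
  have hc : (S.erase u).card = S.card - 1 := Finset.card_erase_of_mem hu
  constructor
  · rintro ⟨v, hv, hI⟩
    refine le_csSup hbdd ⟨insert v (S.erase u), ?_, hI, ?_⟩
    · intro x hx
      rcases Finset.mem_insert.mp hx with rfl | hx
      · exact Finset.mem_union_right _ hv
      · exact Finset.mem_union_left _ hx
    · rw [Finset.card_insert_of_notMem fun h => hA v hv (Finset.mem_of_mem_erase h)]
      omega
  · intro h
    obtain ⟨T, hT, hTI, hTc⟩ := Nat.sSup_mem
      (s := {n : ℕ | ∃ T ⊆ S.erase u ∪ A, M.Indep T ∧ T.card = n})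
      ⟨0, ∅, Finset.empty_subset _, M.indep_empty, Finset.card_empty⟩ hbdd
    have h' : S.card ≤ T.card := hTc ▸ h
    obtain ⟨x, hx, hxI⟩ := M.indep_aug hTI
      (M.indep_subset hS (Finset.erase_subset u S)) (by omega)
    rw [Finset.mem_sdiff] at hx
    exact ⟨x, (Finset.mem_union.mp (hT hx.1)).resolve_left hx.2, hxI⟩
end

section
/- Let s, v₁, v₂, …, v_{l−1}, t be a shortest (s, t)-path in the exchange graph G(S) relative to a common independent set S ∈ I' ∩ I''. Then S' = S △ {v₁, …, v_{l−1}} = S + v₁ − v₂ + ⋯ − v_{l−2} + v_{l−1} is a common independent set, S' ∈ I' ∩ I'', and |S'| = |S| + 1. -/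
/-- `reachIn Adj n x y` : there is a directed walk with exactly `n` edges from `x` to `y`. -/
def reachIn {α : Type*} (Adj : α → α → Prop) : ℕ → α → α → Prop
  | 0, x, y => x = y
  | n + 1, x, y => ∃ z, Adj x z ∧ reachIn Adj n z y

/-- Distance (number of edges of a shortest directed path) from `x` to `y`; `⊤` if none. -/
noncomputable def ddist {α : Type*} (Adj : α → α → Prop) (x y : α) : ℕ∞ :=
  sInf {n : ℕ∞ | ∃ m : ℕ, n = (m : ℕ∞) ∧ reachIn Adj m x y}

/-- Vertices of the exchange graph: the ground elements plus a source `src` and a sink `snk`. -/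
inductive XVert (V : Type*) where
  | elt : V → XVert V
  | src : XVert V
  | snk : XVert V

/-- The exchange graph `G(S)` of two matroids relative to a common independent set `S`. -/
def exchangeAdj {V : Type*} [DecidableEq V] [Fintype V]
    (M₁ M₂ : FinMatroid V) (S : Finset V) : XVert V → XVert V → Prop
  | XVert.elt a, XVert.elt b =>
      (a ∈ S ∧ b ∉ S ∧ M₁.Indep (insert b (S.erase a))) ∨
      (a ∉ S ∧ b ∈ S ∧ M₂.Indep (insert a (S.erase b)))
  | XVert.src, XVert.elt b => b ∉ S ∧ M₁.Indep (insert b S)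
  | XVert.elt a, XVert.snk => a ∉ S ∧ M₂.Indep (insert a S)
  | _, _ => False

theorem FinMatroid.swap_aux {V : Type*} [DecidableEq V] [Fintype V] (M : FinMatroid V)
    (U : Finset V) (x a b : V) (ha : a ∈ U) (hb : b ∉ U) (hx : x ∉ U)
    (hdep : ¬ M.Indep (insert b U)) (hab : M.Indep (insert b (U.erase a)))
    (hUx : M.Indep (insert x U)) : M.Indep (insert b ((insert x U).erase a)) := by
  have hc : (insert b (U.erase a)).card < (insert x U).card := by
    rw [Finset.card_insert_of_notMem (by simp [hb]), Finset.card_insert_of_notMem hx,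
      Finset.card_erase_add_one ha]
    omega
  obtain ⟨y, hy, hI⟩ := M.indep_aug hUx hab hc
  by_cases hya : y = a
  · subst hya
    exfalso
    apply hdep
    rw [Finset.insert_comm, Finset.insert_erase ha] at hI
    exact hI
  · have hyx : y = x := by
      simp only [Finset.mem_sdiff, Finset.mem_insert, Finset.mem_erase] at hy
      tauto
    subst hyx
    rw [Finset.erase_insert_of_ne hya, Finset.insert_comm]
    exact hI

theorem FinMatroid.dep_aux {V : Type*} [DecidableEq V] [Fintype V] (M : FinMatroid V)
    (T : Finset V) (hT : M.Indep T) (a c b : V) (ha : a ∈ T) (hc : c ∈ T) (hac : a ≠ c)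
    (hb : b ∉ T)
    (h1 : ¬ M.Indep (insert b (T.erase a))) (h2 : ¬ M.Indep (insert b (T.erase c))) :
    ¬ M.Indep (insert b ((T.erase a).erase c)) := by
  intro h
  have hcard : (insert b ((T.erase a).erase c)).card < T.card := by
    rw [Finset.card_insert_of_notMem (by simp [hb]),
      Finset.card_erase_add_one (by simp [hc, hac.symm])]
    exact Finset.card_erase_lt_of_mem ha
  obtain ⟨y, hy, hI⟩ := M.indep_aug hT h hcard
  have : y = a ∨ y = c := by
    simp only [Finset.mem_sdiff, Finset.mem_insert, Finset.mem_erase] at hy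
    tauto
  rcases this with rfl | rfl
  · apply h2
    convert hI using 1
    ext z
    simp only [Finset.mem_insert, Finset.mem_erase]
    by_cases hz : z = y
    · subst hz; simp [hac, ha]
    · simp [hz]
  · apply h1
    convert hI using 1
    ext z
    simp only [Finset.mem_insert, Finset.mem_erase]
    by_cases hz : z = y
    · subst hz; simp [hac.symm, hc]
    · simp [hz]

theorem FinMatroid.multi_swap {V : Type*} [DecidableEq V] [Fintype V] (M : FinMatroid V)
    (m : ℕ) : ∀ (T : Finset V) (_ : M.Indep T) (a b : ℕ → V)
    (_ : ∀ i < m, a i ∈ T) (_ : ∀ i < m, b i ∉ T)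
    (_ : ∀ i < m, M.Indep (insert (b i) (T.erase (a i))))
    (_ : ∀ i j, i < j → j < m → ¬ M.Indep (insert (b j) (T.erase (a i)))),
    M.Indep ((T \ (Finset.range m).image a) ∪ (Finset.range m).image b) ∧
    ((T \ (Finset.range m).image a) ∪ (Finset.range m).image b).card = T.card := by
  induction m with
  | zero => intro T hT a b _ _ _ _; simpa using hT
  | succ m ih =>
    intro T hT a b ha hb hI hD
    have hane : ∀ i j, i < j → j < m + 1 → a i ≠ a j := by
      intro i j hij hj h
      exact hD i j hij hj (h ▸ hI j hj)
    have hbne : ∀ i j, i < j → j < m + 1 → b i ≠ b j := by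
      intro i j hij hj h
      exact hD i j hij hj (h ▸ hI i (by omega))
    have h0a := ha 0 (by omega)
    have h0b := hb 0 (by omega)
    have key := ih (insert (b 0) (T.erase (a 0))) (hI 0 (by omega))
      (fun i => a (i+1)) (fun i => b (i+1))
      (fun i hi => by
        have := hane 0 (i+1) (by omega) (by omega)
        simp [this.symm, ha (i+1) (by omega)])
      (fun i hi => by
        have := hbne 0 (i+1) (by omega) (by omega)
        simp [this.symm, hb (i+1) (by omega)])
      (fun i hi => by
        have h1 := hane 0 (i+1) (by omega) (by omega)
        apply M.swap_aux
        · simp [h1.symm, ha (i+1) (by omega)]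
        · simp [hb (i+1) (by omega)]
        · simp [h0b]
        · exact hD 0 (i+1) (by omega) (by omega)
        · refine M.indep_subset (hI (i+1) (by omega)) ?_
          exact Finset.insert_subset_insert _ (Finset.erase_subset_erase _ (Finset.erase_subset _ _))
        · exact hI 0 (by omega))
      (fun i j hij hj h => by
        refine M.dep_aux T hT (a 0) (a (i+1)) (b (j+1)) h0a (ha _ (by omega))
          (hane _ _ (by omega) (by omega)) (hb _ (by omega)) (hD _ _ (by omega) (by omega))
          (hD _ _ (by omega) (by omega)) (M.indep_subset h ?_)
        exact Finset.insert_subset_insert _ (Finset.erase_subset_erase _ (Finset.subset_insert _ _)))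
    have hset : (insert (b 0) (T.erase (a 0)) \ (Finset.range m).image (fun i => a (i+1))) ∪
        (Finset.range m).image (fun i => b (i+1)) =
        (T \ (Finset.range (m+1)).image a) ∪ (Finset.range (m+1)).image b := by
      have e : ∀ f : ℕ → V, (Finset.range (m+1)).image f =
          insert (f 0) ((Finset.range m).image (fun i => f (i+1))) := by
        intro f
        rw [Finset.range_add_one', Finset.image_insert, Finset.map_eq_image, Finset.image_image]
        rfl
      have hn : b 0 ∉ (Finset.range m).image (fun i => a (i+1)) := by
        simp only [Finset.mem_image, Finset.mem_range, not_exists, not_and]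
        intro i hi h
        exact h0b (h ▸ ha (i+1) (by omega))
      rw [e a, e b]
      ext z
      by_cases hz : z = b 0
      · subst hz; simp only [Finset.mem_union, Finset.mem_sdiff, Finset.mem_insert]; tauto
      · simp only [Finset.mem_union, Finset.mem_sdiff, Finset.mem_insert, Finset.mem_erase]; tauto
    rw [hset] at key
    refine ⟨key.1, key.2.trans ?_⟩
    rw [Finset.card_insert_of_notMem (by simp [h0b]), Finset.card_erase_add_one h0a]

theorem FinMatroid.path_swap {V : Type*} [DecidableEq V] [Fintype V] (M : FinMatroid V)
    (m : ℕ) (S : Finset V) (x : V) (hx : x ∉ S) (hSx : M.Indep (insert x S)) (a b : ℕ → V)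
    (ha : ∀ i < m, a i ∈ S) (hb : ∀ i < m, b i ∉ S)
    (hbd : ∀ i < m, ¬ M.Indep (insert (b i) S))
    (hI : ∀ i < m, M.Indep (insert (b i) (S.erase (a i))))
    (hD : ∀ i j, i < j → j < m → ¬ M.Indep (insert (b j) (S.erase (a i)))) :
    M.Indep ((insert x S \ (Finset.range m).image a) ∪ (Finset.range m).image b) ∧
    ((insert x S \ (Finset.range m).image a) ∪ (Finset.range m).image b).card = S.card + 1 := by
  rw [← Finset.card_insert_of_notMem hx]
  apply M.multi_swap m _ hSx
  · intro i hi; simp [ha i hi]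
  · intro i hi
    have : b i ≠ x := by rintro rfl; exact hbd i hi hSx
    simp [this, hb i hi]
  · intro i hi
    exact M.swap_aux S x _ _ (ha i hi) (hb i hi) hx (hbd i hi) (hI i hi) hSx
  · intro i j hij hj h
    refine hD i j hij hj (M.indep_subset h ?_)
    exact Finset.insert_subset_insert _ (Finset.erase_subset_erase _ (Finset.subset_insert _ _))

theorem symm_prop_aux {s t a b o e x : Prop} (h1 : a ↔ o) (h2 : x ∨ b ↔ e) (h3 : t ↔ o ∨ e)
    (h4 : o → s) (h5 : e → ¬ s) : (s ∧ ¬ t ∨ t ∧ ¬ s) ↔ ((x ∨ s) ∧ ¬ a) ∨ b := by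
  rw [h3, ← h1, ← h2]; rw [← h1] at h4; rw [← h2] at h5; clear h1 h2 h3
  by_cases hs : s <;> by_cases ha : a <;> by_cases hx : x <;> by_cases hb : b <;> simp_all

theorem reachIn_trans {α : Type*} (Adj : α → α → Prop) (m n : ℕ) : ∀ x y z,
    reachIn Adj m x y → reachIn Adj n y z → reachIn Adj (m + n) x z := by
  induction m with
  | zero => intro x y z h1 h2; cases h1; simpa using h2
  | succ m ih =>
    rintro x y z ⟨u, hu, h⟩ h2
    rw [show m + 1 + n = (m + n) + 1 by omega]
    exact ⟨u, hu, ih _ _ _ h h2⟩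

theorem reachIn_seq {α : Type*} (Adj : α → α → Prop) (w : ℕ → α) (N : ℕ)
    (h : ∀ i < N, Adj (w i) (w (i+1))) (k : ℕ) : ∀ i, i + k ≤ N → reachIn Adj k (w i) (w (i+k)) := by
  induction k with
  | zero => intro i _; rfl
  | succ k ih =>
    intro i hi
    refine ⟨w (i+1), h i (by omega), ?_⟩
    have := ih (i+1) (by omega)
    rwa [show i + 1 + k = i + (k + 1) by omega] at this

theorem no_shortcut {α : Type*} (Adj : α → α → Prop) (w : ℕ → α) (N : ℕ)
    (h : ∀ i < N, Adj (w i) (w (i+1))) (hd : ddist Adj (w 0) (w N) = (N : ℕ∞))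
    (i j : ℕ) (hi : i ≤ N) (hj : j ≤ N) (hij : Adj (w i) (w j)) : j ≤ i + 1 := by
  have h1 := reachIn_seq Adj w N h i 0 (by omega)
  have h2 := reachIn_seq Adj w N h (N - j) j (by omega)
  rw [Nat.zero_add] at h1
  rw [show j + (N - j) = N by omega] at h2
  have h3 : reachIn Adj (N - j + 1) (w i) (w N) := ⟨_, hij, h2⟩
  have h4 := reachIn_trans Adj _ _ _ _ _ h1 h3
  have h5 : ddist Adj (w 0) (w N) ≤ ((i + (N - j + 1) : ℕ) : ℕ∞) := sInf_le ⟨_, rfl, h4⟩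
  rw [hd] at h5
  have h6 : N ≤ i + (N - j + 1) := by exact_mod_cast h5
  omega

/-- Augmenting along a shortest `(s,t)`-path `s, v₁, …, v_{l−1}, t` in the exchange graph
yields the common independent set `S △ {v₁, …, v_{l−1}}` of size `|S| + 1`. -/
theorem shortest_augmenting_path_exchange {V : Type*} [DecidableEq V] [Fintype V]
    (M₁ M₂ : FinMatroid V) (S : Finset V) (hS₁ : M₁.Indep S) (hS₂ : M₂.Indep S)
    (vs : List V) (hne : vs ≠ []) (hnd : vs.Nodup)
    (hchain : List.Chain' (exchangeAdj M₁ M₂ S)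
      (XVert.src :: (vs.map XVert.elt ++ [XVert.snk])))
    (hshort : ddist (exchangeAdj M₁ M₂ S) XVert.src XVert.snk = ((vs.length + 1 : ℕ) : ℕ∞)) :
    M₁.Indep (symmDiff S vs.toFinset) ∧ M₂.Indep (symmDiff S vs.toFinset) ∧
      (symmDiff S vs.toFinset).card = S.card + 1 := by
  obtain ⟨n, hn⟩ : ∃ n, vs.length = n := ⟨_, rfl⟩
  have hpos : 0 < n := by rw [← hn]; exact List.length_pos_of_ne_nil hne
  obtain ⟨d, _⟩ := List.exists_mem_of_ne_nil vs hne
  obtain ⟨v, hv⟩ : ∃ v : ℕ → V, v = fun i => vs.getD i d := ⟨_, rfl⟩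
  obtain ⟨w, hw⟩ : ∃ w : ℕ → XVert V, w = fun i =>
    (XVert.src :: (vs.map XVert.elt ++ [XVert.snk])).getD i XVert.snk := ⟨_, rfl⟩
  have hw0 : w 0 = XVert.src := by simp [hw]
  have hwv : ∀ i < n, w (i+1) = XVert.elt (v i) := by
    intro i hi
    have : i < vs.length := by omega
    simp [hw, hv, List.getElem?_append, this]
  have hwn : w (n+1) = XVert.snk := by
    simp [hw, ← hn]
  have hadj : ∀ i < n + 1, exchangeAdj M₁ M₂ S (w i) (w (i+1)) := by
    intro i hi
    have h := List.isChain_iff_getElem.1 hchain i (by simp; omega)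
    have e : ∀ j < n + 2, ∀ h, w j = (XVert.src :: (vs.map XVert.elt ++ [XVert.snk]))[j]'h := by
      intro j hj h
      rw [hw]
      exact List.getD_eq_getElem _ _ h
    rw [e i (by omega) (by simp; omega), e (i+1) (by omega) (by simp; omega)]
    exact h
  have hmem : ∀ x, x ∈ vs.toFinset ↔ ∃ i < n, v i = x := by
    intro x
    rw [List.mem_toFinset, List.mem_iff_getElem]
    constructor
    · rintro ⟨i, hi, rfl⟩
      exact ⟨i, by omega, by rw [hv]; exact List.getD_eq_getElem _ _ hi⟩
    · rintro ⟨i, hi, rfl⟩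
      exact ⟨i, by omega, by rw [hv]; exact (List.getD_eq_getElem _ _ _).symm⟩
  rw [hn] at hshort
  have hns : ∀ i j, i ≤ n + 1 → j ≤ n + 1 → exchangeAdj M₁ M₂ S (w i) (w j) → j ≤ i + 1 :=
    no_shortcut _ w (n+1) hadj (by rw [hw0, hwn]; exact hshort)
  clear hshort hchain
  have hsrc : ∀ i < n, v i ∉ S → M₁.Indep (insert (v i) S) → i = 0 := by
    intro i hi h1 h2
    have := hns 0 (i+1) (by omega) (by omega) (by rw [hw0, hwv i hi]; exact ⟨h1, h2⟩)
    omega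
  have hsnk : ∀ i < n, v i ∉ S → M₂.Indep (insert (v i) S) → i + 1 = n := by
    intro i hi h1 h2
    have := hns (i+1) (n+1) (by omega) (by omega) (by rw [hwn, hwv i hi]; exact ⟨h1, h2⟩)
    omega
  have hmid : ∀ i j, i < n → j < n → exchangeAdj M₁ M₂ S (.elt (v i)) (.elt (v j)) →
      j ≤ i + 1 := by
    intro i j hi hj h
    have := hns (i+1) (j+1) (by omega) (by omega) (by rw [hwv i hi, hwv j hj]; exact h)
    omega
  have h0 : v 0 ∉ S ∧ M₁.Indep (insert (v 0) S) := by
    have := hadj 0 (by omega)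
    rw [hw0, hwv 0 hpos] at this
    exact this
  have hl : v (n-1) ∉ S ∧ M₂.Indep (insert (v (n-1)) S) := by
    have := hadj n (by omega)
    have e := hwv (n-1) (by omega)
    rw [show n - 1 + 1 = n by omega] at e
    rw [hwn, e] at this
    exact this
  have hstep : ∀ i, i + 1 < n → exchangeAdj M₁ M₂ S (.elt (v i)) (.elt (v (i+1))) := by
    intro i hi
    have := hadj (i+1) (by omega)
    rwa [hwv i (by omega), hwv (i+1) hi] at this
  have hpar : ∀ i < n, (v i ∈ S ↔ i % 2 = 1) := by
    intro i
    induction i with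
    | zero => intro _; simp [h0.1]
    | succ i ih =>
      intro hi
      have ih := ih (by omega)
      rcases hstep i hi with ⟨p, q, _⟩ | ⟨p, q, _⟩
      · have := ih.1 p
        simp only [q, false_iff]; omega
      · have : ¬ (i % 2 = 1) := fun h => p (ih.2 h)
        simp only [q, true_iff]; omega
  have hodd : n % 2 = 1 := by
    have : ¬ ((n-1) % 2 = 1) := fun h => hl.1 ((hpar (n-1) (by omega)).2 h)
    omega
  obtain ⟨m, hm⟩ : ∃ m, n = 2 * m + 1 := ⟨n / 2, by omega⟩
  have hE : ∀ i ≤ m, v (2*i) ∉ S := by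
    intro i hi h
    have := (hpar (2*i) (by omega)).1 h
    omega
  have hO : ∀ i < m, v (2*i+1) ∈ S := by
    intro i hi
    exact (hpar (2*i+1) (by omega)).2 (by omega)
  have hset : ∀ (x : V) (a b : ℕ → V) (_ : ∀ z, (z ∈ (Finset.range m).image a ↔ ∃ i < m, v (2*i+1) = z))
      (_ : ∀ z, (z = x ∨ z ∈ (Finset.range m).image b ↔ ∃ i ≤ m, v (2*i) = z)),
      symmDiff S vs.toFinset =
      (insert x S \ (Finset.range m).image a) ∪ (Finset.range m).image b := by
    intro x a b h1 h2
    ext z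
    have h3 : z ∈ vs.toFinset ↔ (∃ i < m, v (2*i+1) = z) ∨ ∃ i ≤ m, v (2*i) = z := by
      rw [hmem]
      constructor
      · rintro ⟨i, hi, rfl⟩
        rcases Nat.even_or_odd' i with ⟨k, rfl | rfl⟩
        · exact Or.inr ⟨k, by omega, rfl⟩
        · exact Or.inl ⟨k, by omega, rfl⟩
      · rintro (⟨i, hi, h⟩ | ⟨i, hi, h⟩)
        · exact ⟨_, by omega, h⟩
        · exact ⟨_, by omega, h⟩
    have h4 : (∃ i < m, v (2*i+1) = z) → z ∈ S := by
      rintro ⟨i, hi, rfl⟩; exact hO i hi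
    have h5 : (∃ i ≤ m, v (2*i) = z) → z ∉ S := by
      rintro ⟨i, hi, rfl⟩; exact hE i hi
    have h1 := h1 z
    have h2 := h2 z
    simp only [Finset.mem_symmDiff, Finset.mem_union, Finset.mem_sdiff, Finset.mem_insert]
    exact symm_prop_aux h1 h2 h3 h4 h5
  have r1 := M₁.path_swap m S (v 0) h0.1 h0.2 (fun i => v (2*i+1)) (fun i => v (2*(i+1)))
    hO (fun i hi => hE (i+1) (by omega))
    (fun i hi h => by
      have := hsrc (2*(i+1)) (by omega) (hE _ (by omega)) h
      omega)
    (fun i hi => by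
      rcases hstep (2*i+1) (by omega) with h | h
      · exact h.2.2
      · exact absurd (hO i hi) h.1)
    (fun i j hij hj h => by
      have := hmid (2*i+1) (2*(j+1)) (by omega) (by omega)
        (Or.inl ⟨hO _ (by omega), hE _ (by omega), h⟩)
      omega)
  rw [show n - 1 = 2 * m by omega] at hl
  have r2 := M₂.path_swap m S (v (2*m)) hl.1 hl.2 (fun i => v (2*(m-1-i)+1))
    (fun i => v (2*(m-1-i)))
    (fun i hi => hO _ (by omega)) (fun i hi => hE _ (by omega))
    (fun i hi h => by
      have := hsnk (2*(m-1-i)) (by omega) (hE _ (by omega)) h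
      omega)
    (fun i hi => by
      rcases hstep (2*(m-1-i)) (by omega) with h | h
      · exact absurd h.1 (hE _ (by omega))
      · exact h.2.2)
    (fun i j hij hj h => by
      have := hmid (2*(m-1-j)) (2*(m-1-i)+1) (by omega) (by omega)
        (Or.inr ⟨hE _ (by omega), hO _ (by omega), h⟩)
      omega)
  rw [← hset] at r1
  rotate_left
  · intro z; simp
  · intro z
    simp only [Finset.mem_image, Finset.mem_range]
    constructor
    · rintro (rfl | ⟨i, hi, rfl⟩)
      · exact ⟨0, by omega, rfl⟩
      · exact ⟨i+1, by omega, rfl⟩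
    · rintro ⟨i, hi, rfl⟩
      rcases i with _ | i
      · exact Or.inl rfl
      · exact Or.inr ⟨i, by omega, rfl⟩
  rw [← hset] at r2
  rotate_left
  · intro z
    simp only [Finset.mem_image, Finset.mem_range]
    constructor
    · rintro ⟨i, hi, rfl⟩
      exact ⟨m-1-i, by omega, rfl⟩
    · rintro ⟨i, hi, rfl⟩
      exact ⟨m-1-i, by omega, by rw [show m-1-(m-1-i) = i by omega]⟩
  · intro z
    simp only [Finset.mem_image, Finset.mem_range]
    constructor
    · rintro (rfl | ⟨i, hi, rfl⟩)
      · exact ⟨m, le_rfl, rfl⟩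
      · exact ⟨m-1-i, by omega, rfl⟩
    · rintro ⟨i, hi, rfl⟩
      by_cases him : i = m
      · exact Or.inl (by rw [him])
      · exact Or.inr ⟨m-1-i, by omega, by rw [show m-1-(m-1-i) = i by omega]⟩
  exact ⟨r1.1, r2.1, r1.2⟩
end

section
/- Let M_1 = (V, I_1), …, M_k = (V, I_k) be k matroids over a common finite ground set V, let P = s, v₁, …, v_{l−1}, t_j be a shortest (s, T)-path in the compressed exchange graph G(S_1, …, S_k) relative to a partition (S_1, …, S_k) of S with S_i ∈ I_i, and let (S'_1, …, S'_k) be the partition obtained by augmenting along P. Then for every vertex v ∈ {v₁, …, v_{l−1}} on the path P, the distance from s to v strictly increases: d'(s, v) > d(s, v), where d and d' denote distances in G(S_1, …, S_k) and G(S'_1, …, S'_k) respectively. -/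
/-- `S` is partitionable w.r.t. the matroids `M i`: it can be partitioned into
sets `P i` with `P i` independent in `M i`. -/
def Partitionable {V ι : Type*} [DecidableEq V] [Fintype V] [DecidableEq ι] [Fintype ι]
    (M : ι → FinMatroid V) (S : Finset V) : Prop :=
  ∃ P : ι → Finset V, (∀ i, (M i).Indep (P i)) ∧
    (∀ i j, i ≠ j → Disjoint (P i) (P j)) ∧ Finset.univ.biUnion P = S

/-- Vertices of the compressed exchange graph: ground elements, a source `src`,
and one sink `snk i` for each index `i`. -/
inductive CVert (V ι : Type*) where
  | elt : V → CVert V ι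
  | src : CVert V ι
  | snk : ι → CVert V ι

/-- The compressed exchange graph `G(S₁, …, S_k)` relative to the partition `P`. -/
def compAdj {V ι : Type*} [DecidableEq V] [Fintype V] [DecidableEq ι] [Fintype ι]
    (M : ι → FinMatroid V) (P : ι → Finset V) : CVert V ι → CVert V ι → Prop
  | CVert.elt v, CVert.elt u =>
      ∃ i, u ∈ P i ∧ ¬ (M i).Indep (insert v (P i)) ∧
        (M i).Indep (insert v ((P i).erase u))
  | CVert.src, CVert.elt v => v ∉ Finset.univ.biUnion P
  | CVert.elt v, CVert.snk i => v ∉ P i ∧ (M i).Indep (insert v (P i))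
  | _, _ => False

/-- The result of the procedure `Update`: augmenting the partition `P` along the path
`s, v₁, …, v_{l−1}, t_j`. -/
def updatePartition {V ι : Type*} [DecidableEq V] [DecidableEq ι]
    (P : ι → Finset V) (π : V → ι) (vs : List V) (hne : vs ≠ []) (j : ι) :
    ι → Finset V := fun i =>
  ((P i) \ (vs.tail.filter (fun v => π v = i)).toFinset)
    ∪ (((vs.zip vs.tail).filter (fun p => π p.2 = i)).map Prod.fst).toFinset
    ∪ (if i = j then {vs.getLast hne} else ∅)


theorem FinMatroid.exists_matroid {V : Type*} [DecidableEq V] [Fintype V] (M : FinMatroid V) :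
    ∃ N : Matroid V, N.E = Set.univ ∧ ∀ X : Finset V, N.Indep (X : Set V) ↔ M.Indep X := by
  refine ⟨(IndepMatroid.ofFinset Set.univ M.Indep M.indep_empty
    (fun I J hJ hIJ => M.indep_subset hJ hIJ)
    (fun I J hI hJ hc => ?_) (fun _ _ => Set.subset_univ _)).matroid, rfl, fun X => ?_⟩
  · obtain ⟨x, hx, h⟩ := M.indep_aug hJ hI hc
    rw [Finset.mem_sdiff] at hx
    exact ⟨x, hx.1, hx.2, h⟩
  · simp

section core
variable {V : Type*} [DecidableEq V] [Fintype V] {M : FinMatroid V} {N : Matroid V}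

theorem exch_circ (hE : N.E = Set.univ) (hN : ∀ X : Finset V, N.Indep (X : Set V) ↔ M.Indep X)
    {A : Finset V} (hA : M.Indep A) {v : V} (hv : ¬ M.Indep (insert v A)) :
    ∃ C : Set V, N.IsCircuit C ∧ v ∈ C ∧ v ∉ A ∧ C ⊆ insert v (A : Set V) ∧
      ∀ u ∈ A, (u ∈ C ↔ M.Indep (insert v (A.erase u))) := by
  have hvA : v ∉ A := by
    intro h; rw [Finset.insert_eq_self.2 h] at hv; exact hv hA
  have hA' := (hN A).2 hA
  have hcl : v ∈ N.closure (A : Set V) := by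
    rw [hA'.mem_closure_iff']
    refine ⟨by simp [hE], fun h => ?_⟩
    rw [← Finset.coe_insert, hN] at h
    exact absurd h hv
  refine ⟨N.fundCircuit v A, hA'.fundCircuit_isCircuit hcl (by simpa using hvA),
    N.mem_fundCircuit v A, hvA, N.fundCircuit_subset_insert v A, fun u hu => ?_⟩
  rw [hA'.mem_fundCircuit_iff hcl (by simpa using hvA), ← hN]
  have : insert v (A : Set V) \ {u} = ((insert v (A.erase u) : Finset V) : Set V) := by
    ext y
    have : v ≠ u := fun h => hvA (h ▸ hu)
    simp only [Set.mem_sdiff, Set.mem_insert_iff, Finset.mem_coe, Set.mem_singleton_iff,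
      Finset.coe_insert, Finset.coe_erase]
    grind
  rw [this]

theorem exch1 (hE : N.E = Set.univ) (hN : ∀ X : Finset V, N.Indep (X : Set V) ↔ M.Indep X)
    {A : Finset V} (hA : M.Indep A) {v : V} (hv : ¬ M.Indep (insert v A)) {T : Set V}
    (h : ∀ u ∈ A, M.Indep (insert v (A.erase u)) → u ∈ N.closure T) : v ∈ N.closure T := by
  obtain ⟨C, hC, hvC, hvA, hCA, hu⟩ := exch_circ hE hN hA hv
  refine N.closure_subset_closure_of_subset_closure ?_ (hC.mem_closure_sdiff_singleton_of_mem hvC)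
  rintro x ⟨hx, hxv⟩
  have hxA : x ∈ A := by
    rcases hCA hx with h | h
    · exact absurd h hxv
    · exact h
  exact h x hxA ((hu x hxA).1 hx)

theorem exch2 (hE : N.E = Set.univ) (hN : ∀ X : Finset V, N.Indep (X : Set V) ↔ M.Indep X)
    {A : Finset V} (hA : M.Indep A) {v : V} (hv : ¬ M.Indep (insert v A)) {T : Set V}
    {u₀ : V} (hu₀ : u₀ ∈ A) (hu₀' : M.Indep (insert v (A.erase u₀))) (hvT : v ∈ N.closure T)
    (h : ∀ u ∈ A, u ≠ u₀ → M.Indep (insert v (A.erase u)) → u ∈ N.closure T) :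
    u₀ ∈ N.closure T := by
  obtain ⟨C, hC, hvC, hvA, hCA, hu⟩ := exch_circ hE hN hA hv
  refine N.closure_subset_closure_of_subset_closure ?_
    (hC.mem_closure_sdiff_singleton_of_mem ((hu u₀ hu₀).2 hu₀'))
  rintro x ⟨hx, hxv⟩
  rcases hCA hx with h' | h'
  · exact h' ▸ hvT
  · exact h x h' hxv ((hu x h').1 hx)

theorem indep_of_span (hN : ∀ X : Finset V, N.Indep (X : Set V) ↔ M.Indep X)
    {I J : Finset V} (hI : M.Indep I) (h : ∀ x ∈ I, x ∈ N.closure (J : Set V))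
    (hc : J.card ≤ I.card) : M.Indep J := by
  rw [← hN, Matroid.indep_iff_eRk_eq_encard_of_finite J.finite_toSet]
  refine le_antisymm (N.eRk_le_encard _) ?_
  have := ((hN I).2 hI).encard_le_eRk_of_subset (X := N.closure (J : Set V)) h
  rw [N.eRk_closure_eq] at this
  refine le_trans ?_ this
  simpa using hc

variable {A A' : Finset V} {D : ℕ → V → Prop} {w : ℕ → V} {L : ℕ}

theorem core1 (hE : N.E = Set.univ) (hN : ∀ X : Finset V, N.Indep (X : Set V) ↔ M.Indep X)
    (hA : M.Indep A) (hnon : ∀ x ∈ A, (∀ a < L, w a ≠ x) → x ∈ A')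
    (hpath : ∀ b, b + 1 < L → w (b + 1) ∈ A → w b ∈ A' ∧ ¬ M.Indep (insert (w b) A) ∧
      M.Indep (insert (w b) (A.erase (w (b + 1)))))
    (h0 : w 0 ∉ A)
    (hD : ∀ m v u, D m v → u ∈ A → ¬ M.Indep (insert v A) → M.Indep (insert v (A.erase u)) →
      D (m + 1) u)
    (hDw : ∀ a < L, D (a + 1) (w a)) (hDw' : ∀ a < L, ∀ m, D m (w a) → a + 1 ≤ m)
    (hmono : ∀ m n x, m ≤ n → D m x → D n x) (m : ℕ) :
    ∀ b, b + 1 < L → w (b + 1) ∈ A → b + 1 ≤ m → 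
      w (b + 1) ∈ N.closure {x | x ∈ A' ∧ D (m + 1) x ∧ ∀ a < L, w a = x → a + 1 ≤ m} := by
  intro b
  induction b using Nat.strong_induction_on with
  | _ b ih =>
  intro hb hwb hbm
  obtain ⟨h1, h2, h3⟩ := hpath b hb hwb
  refine exch2 hE hN hA h2 hwb h3 ?_ ?_
  · refine N.mem_closure_of_mem' ⟨h1, hmono _ _ _ (by omega) (hDw b (by omega)), ?_⟩ (by simp [hE])
    intro a ha hab
    have := hDw' a ha (b + 1) (hab ▸ hDw b (by omega))
    omega
  · intro u hu hne hi
    have hDu := hD _ _ _ (hDw b (by omega)) hu h2 hi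
    by_cases hp : ∃ a < L, w a = u
    · obtain ⟨a, ha, rfl⟩ := hp
      cases a with
      | zero => exact absurd hu h0
      | succ c =>
        have := hDw' _ ha _ hDu
        have hcb : c ≠ b := by rintro rfl; exact hne rfl
        exact ih c (by omega) ha hu (by omega)
    · push Not at hp
      exact N.mem_closure_of_mem' ⟨hnon u hu hp, hmono _ _ _ (by omega) hDu,
        fun a ha h => absurd h (hp a ha)⟩ (by simp [hE])

theorem core2 (hE : N.E = Set.univ) (hN : ∀ X : Finset V, N.Indep (X : Set V) ↔ M.Indep X)
    (hA : M.Indep A) (hnon : ∀ x ∈ A, (∀ a < L, w a ≠ x) → x ∈ A')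
    (hpath : ∀ b, b + 1 < L → w (b + 1) ∈ A → w b ∈ A' ∧ ¬ M.Indep (insert (w b) A) ∧
      M.Indep (insert (w b) (A.erase (w (b + 1)))))
    (h0 : w 0 ∉ A)
    (hD : ∀ m v u, D m v → u ∈ A → ¬ M.Indep (insert v A) → M.Indep (insert v (A.erase u)) →
      D (m + 1) u)
    (hDw : ∀ a < L, D (a + 1) (w a)) (hDw' : ∀ a < L, ∀ m, D m (w a) → a + 1 ≤ m)
    (hmono : ∀ m n x, m ≤ n → D m x → D n x) (m : ℕ) (x : V) (hx : x ∈ A) (hDx : D (m + 1) x) :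
    x ∈ N.closure {x | x ∈ A' ∧ D (m + 1) x ∧ ∀ a < L, w a = x → a + 1 ≤ m} := by
  by_cases hp : ∃ a < L, w a = x
  · obtain ⟨a, ha, rfl⟩ := hp
    cases a with
    | zero => exact absurd hx h0
    | succ c =>
      have := hDw' _ ha _ hDx
      exact core1 hE hN hA hnon hpath h0 hD hDw hDw' hmono m c ha hx (by omega)
  · push Not at hp
    exact N.mem_closure_of_mem' ⟨hnon x hx hp, hDx,
        fun a ha h => absurd h (hp a ha)⟩ (by simp [hE])

theorem core3 (hE : N.E = Set.univ) (hN : ∀ X : Finset V, N.Indep (X : Set V) ↔ M.Indep X)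
    (hA : M.Indep A) (hnon : ∀ x ∈ A, (∀ a < L, w a ≠ x) → x ∈ A')
    (hpath : ∀ b, b + 1 < L → w (b + 1) ∈ A → w b ∈ A' ∧ ¬ M.Indep (insert (w b) A) ∧
      M.Indep (insert (w b) (A.erase (w (b + 1)))))
    (h0 : w 0 ∉ A)
    (hD : ∀ m v u, D m v → u ∈ A → ¬ M.Indep (insert v A) → M.Indep (insert v (A.erase u)) →
      D (m + 1) u)
    (hDw : ∀ a < L, D (a + 1) (w a)) (hDw' : ∀ a < L, ∀ m, D m (w a) → a + 1 ≤ m)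
    (hmono : ∀ m n x, m ≤ n → D m x → D n x) (x : V) (hx : x ∈ A) :
    x ∈ N.closure (A' : Set V) := by
  by_cases hp : ∃ a < L, w a = x
  · obtain ⟨a, ha, rfl⟩ := hp
    refine N.closure_subset_closure ?_ (core2 (A' := A') hE hN hA hnon hpath h0 hD hDw hDw' hmono a
      _ hx (hDw a ha))
    exact fun y hy => hy.1
  · push Not at hp
    exact N.mem_closure_of_mem' (hnon x hx hp) (by simp [hE])

theorem core5 (hE : N.E = Set.univ) (hN : ∀ X : Finset V, N.Indep (X : Set V) ↔ M.Indep X)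
    (hA : M.Indep A) (hnon : ∀ x ∈ A, (∀ a < L, w a ≠ x) → x ∈ A')
    (hpath : ∀ b, b + 1 < L → w (b + 1) ∈ A → w b ∈ A' ∧ ¬ M.Indep (insert (w b) A) ∧
      M.Indep (insert (w b) (A.erase (w (b + 1)))))
    (h0 : w 0 ∉ A)
    (hD : ∀ m v u, D m v → u ∈ A → ¬ M.Indep (insert v A) → M.Indep (insert v (A.erase u)) →
      D (m + 1) u)
    (hDw : ∀ a < L, D (a + 1) (w a)) (hDw' : ∀ a < L, ∀ m, D m (w a) → a + 1 ≤ m)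
    (hmono : ∀ m n x, m ≤ n → D m x → D n x)
    (hA' : M.Indep A') (m : ℕ) (v u : V) (hDv : D m v)
    (hv : v ∈ A ∨ ¬ M.Indep (insert v A)) (hu : u ∈ A') (hdep : ¬ M.Indep (insert v A'))
    (hind : M.Indep (insert v (A'.erase u))) :
    D (m + 1) u ∧ ∀ a < L, w a = u → a + 1 ≤ m := by
  have hvA' : v ∉ A' := by
    intro h; rw [Finset.insert_eq_self.2 h] at hdep; exact hdep hA'
  have c2 := core2 (A' := A') hE hN hA hnon hpath h0 hD hDw hDw' hmono m
  have key : v ∈ N.closure {x | x ∈ A' ∧ D (m + 1) x ∧ ∀ a < L, w a = x → a + 1 ≤ m} := by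
    rcases hv with hv | hv
    · exact c2 v hv (hmono _ _ _ (by omega) hDv)
    · exact exch1 hE hN hA hv fun u hu hi => c2 u hu (hD _ _ _ hDv hu hv hi)
  by_contra hcon
  have hsub : insert v {x | x ∈ A' ∧ D (m + 1) x ∧ ∀ a < L, w a = x → a + 1 ≤ m} ⊆
      ((insert v (A'.erase u) : Finset V) : Set V) := by
    rintro y (rfl | ⟨hy1, hy2⟩)
    · simp
    · have : y ≠ u := by rintro rfl; exact hcon hy2
      simp [hy1, this]
  have hi := ((hN _).2 hind).subset hsub
  have hi2 := hi.subset (Set.subset_insert _ _)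
  rw [hi2.mem_closure_iff'] at key
  exact hvA' (key.2 hi).1

end core

theorem reachIn_snoc {α : Type*} {Adj : α → α → Prop} {n : ℕ} {x y z : α}
    (h : reachIn Adj n x y) (hz : Adj y z) : reachIn Adj (n + 1) x z := by
  induction n generalizing x with
  | zero => 
    have h : x = y := h
    subst h; exact ⟨z, hz, rfl⟩
  | succ n ih =>
    obtain ⟨u, hu, h⟩ := h
    exact ⟨u, hu, ih h⟩

theorem reachIn_last {α : Type*} {Adj : α → α → Prop} {n : ℕ} {x z : α}
    (h : reachIn Adj (n + 1) x z) : ∃ y, reachIn Adj n x y ∧ Adj y z := by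
  induction n generalizing x with
  | zero =>
    obtain ⟨u, hu, h⟩ := h
    have h : u = z := h
    subst h
    exact ⟨x, rfl, hu⟩
  | succ n ih =>
    obtain ⟨u, hu, h⟩ := h
    obtain ⟨y, hy, hyz⟩ := ih h
    exact ⟨y, ⟨u, hu, hy⟩, hyz⟩

theorem ddist_le {α : Type*} {Adj : α → α → Prop} {n : ℕ} {x y : α}
    (h : reachIn Adj n x y) : ddist Adj x y ≤ n := sInf_le ⟨n, rfl, h⟩

theorem le_ddist {α : Type*} {Adj : α → α → Prop} {n : ℕ} {x y : α}
    (h : ∀ m, reachIn Adj m x y → n ≤ m) : (n : ℕ∞) ≤ ddist Adj x y := by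
  refine le_sInf ?_
  rintro _ ⟨m, rfl, hm⟩
  exact_mod_cast h m hm

theorem chain_facts {V ι : Type*} (Adj : CVert V ι → CVert V ι → Prop) (j : ι) (vs : List V)
    (hne : vs ≠ []) (hchain : List.IsChain Adj
      (CVert.src :: (vs.map CVert.elt ++ [CVert.snk j]))) :
    Adj CVert.src (CVert.elt (vs.getD 0 (vs.head hne))) ∧
    (∀ a, a + 1 < vs.length → Adj (CVert.elt (vs.getD a (vs.head hne)))
      (CVert.elt (vs.getD (a + 1) (vs.head hne)))) ∧
    Adj (CVert.elt (vs.getD (vs.length - 1) (vs.head hne))) (CVert.snk j) := by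
  rw [List.isChain_iff_getElem] at hchain
  have hpos : 0 < vs.length := List.length_pos_iff.2 hne
  refine ⟨?_, fun a ha => ?_, ?_⟩
  · have := hchain 0 (by simp)
    simpa [List.getElem_append, hpos, List.getD_eq_getElem] using this
  · have := hchain (a + 1) (by simp; omega)
    have h1 : a < vs.length := by omega
    simpa [List.getElem_append, h1, ha] using this
  · have := hchain vs.length (by simp)
    obtain ⟨n, hn⟩ : ∃ n, vs.length = n + 1 := ⟨vs.length - 1, by omega⟩
    simp only [hn] at this
    simpa [List.getElem_append, hn] using this

theorem mem_update {V ι : Type*} [DecidableEq V] [DecidableEq ι]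
    (P : ι → Finset V) (π : V → ι) (vs : List V) (hne : vs ≠ []) (j i : ι) (x : V) :
    x ∈ updatePartition P π vs hne j i ↔
      (x ∈ P i ∧ ¬ (∃ a, a + 1 < vs.length ∧ vs.getD (a + 1) (vs.head hne) = x ∧ π x = i)) ∨
      (∃ a, a + 1 < vs.length ∧ vs.getD a (vs.head hne) = x ∧
        π (vs.getD (a + 1) (vs.head hne)) = i) ∨
      (i = j ∧ x = vs.getD (vs.length - 1) (vs.head hne)) := by
  have hpos : 0 < vs.length := List.length_pos_iff.2 hne
  have e1 : (x ∈ vs.tail ∧ π x = i) ↔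
      (∃ a, a + 1 < vs.length ∧ vs.getD (a + 1) (vs.head hne) = x ∧ π x = i) := by
    rw [List.mem_iff_getElem]
    constructor
    · rintro ⟨⟨a, ha, h⟩, hx⟩
      simp only [List.length_tail] at ha
      refine ⟨a, by omega, ?_, hx⟩
      rw [List.getD_eq_getElem _ _ (by omega), ← h, List.getElem_tail]
    · rintro ⟨a, ha, h, hx⟩
      refine ⟨⟨a, by simp; omega, ?_⟩, hx⟩
      rw [List.getD_eq_getElem _ _ (by omega)] at h
      rw [← h, List.getElem_tail]
  have e2 : (∃ p ∈ vs.zip vs.tail, π p.2 = i ∧ p.1 = x) ↔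
      (∃ a, a + 1 < vs.length ∧ vs.getD a (vs.head hne) = x ∧
        π (vs.getD (a + 1) (vs.head hne)) = i) := by
    constructor
    · rintro ⟨p, hp, h1, h2⟩
      obtain ⟨a, ha, h⟩ := List.mem_iff_getElem.1 hp
      have ha' : a + 1 < vs.length := by simp at ha; omega
      rw [List.getElem_zip, List.getElem_tail] at h
      subst h
      refine ⟨a, ha', ?_, ?_⟩
      · rw [List.getD_eq_getElem _ _ (by omega)]; exact h2
      · rw [List.getD_eq_getElem _ _ (by omega)]; exact h1
    · rintro ⟨a, ha, h1, h2⟩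
      rw [List.getD_eq_getElem _ _ (by omega)] at h1 h2
      refine ⟨(vs[a], vs[a+1]), List.mem_iff_getElem.2 ⟨a, by simp; omega, ?_⟩, h2, h1⟩
      rw [List.getElem_zip, List.getElem_tail]
  have e3 : vs.getLast hne = vs.getD (vs.length - 1) (vs.head hne) := by
    rw [List.getD_eq_getElem _ _ (by omega), List.getLast_eq_getElem]
  have e4 : x ∈ (if i = j then {vs.getLast hne} else ∅ : Finset V) ↔
      (i = j ∧ x = vs.getLast hne) := by
    split_ifs with h <;> simp [h]
  rw [← e1, ← e2, ← e3, ← e4, updatePartition]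
  simp only [Finset.mem_union, Finset.mem_sdiff, List.mem_toFinset, List.mem_filter, List.mem_map,
    decide_eq_true_eq, or_assoc, and_assoc]

theorem card_update {V ι : Type*} [DecidableEq V] [DecidableEq ι]
    (P : ι → Finset V) (π : V → ι) (vs : List V) (hne : vs ≠ []) (hnd : vs.Nodup) (j i : ι)
    (hP : ∀ a, a + 1 < vs.length → vs.getD (a + 1) (vs.head hne) ∈
      P (π (vs.getD (a + 1) (vs.head hne)))) :
    (updatePartition P π vs hne j i).card ≤ (P i).card + if i = j then 1 else 0 := by
  set w : ℕ → V := fun a => vs.getD a (vs.head hne) with hw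
  set K := (Finset.range (vs.length - 1)).filter (fun a => π (w (a + 1)) = i) with hK
  set B := K.image (fun a => w (a + 1)) with hB
  have hKm : ∀ a, a ∈ K ↔ a + 1 < vs.length ∧ π (w (a + 1)) = i := by
    intro a; simp [hK]; omega
  have hBc : B.card = K.card := by
    refine Finset.card_image_of_injOn ?_
    intro a ha b hb hab
    have ha := (hKm a).1 ha
    have hb := (hKm b).1 hb
    simp only [hw] at hab
    rw [List.getD_eq_getElem _ _ ha.1, List.getD_eq_getElem _ _ hb.1] at hab
    have := (hnd.getElem_inj_iff).1 hab
    omega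
  have hBP : B ⊆ P i := by
    intro x hx
    obtain ⟨a, ha, rfl⟩ := Finset.mem_image.1 hx
    have ha := (hKm a).1 ha
    have := hP a ha.1
    rw [← ha.2]; exact this
  have hsub : updatePartition P π vs hne j i ⊆ ((P i \ B) ∪ K.image w) ∪
      (if i = j then {w (vs.length - 1)} else ∅ : Finset V) := by
    intro x hx
    rw [mem_update] at hx
    rcases hx with ⟨h1, h2⟩ | ⟨a, ha, h1, h2⟩ | ⟨h1, h2⟩
    · refine Finset.mem_union_left _ (Finset.mem_union_left _ (Finset.mem_sdiff.2 ⟨h1, ?_⟩))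
      intro hx
      obtain ⟨a, ha, rfl⟩ := Finset.mem_image.1 hx
      have ha := (hKm a).1 ha
      exact h2 ⟨a, ha.1, rfl, ha.2⟩
    · exact Finset.mem_union_left _ (Finset.mem_union_right _
        (Finset.mem_image.2 ⟨a, (hKm a).2 ⟨ha, h2⟩, h1⟩))
    · refine Finset.mem_union_right _ ?_
      rw [if_pos h1, h2]; simp [hw]
  have c1 := Finset.card_le_card hsub
  have c2 := Finset.card_union_le ((P i \ B) ∪ K.image w)
    (if i = j then {w (vs.length - 1)} else ∅ : Finset V)
  have c3 := Finset.card_union_le (P i \ B) (K.image w)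
  have c4 : (K.image w).card ≤ K.card := Finset.card_image_le
  have c5 := Finset.card_sdiff_add_card_eq_card hBP
  have c6 : (if i = j then {w (vs.length - 1)} else ∅ : Finset V).card =
    if i = j then 1 else 0 := by split_ifs <;> simp
  omega

theorem path_vertices_distance_increases {V ι : Type*} [DecidableEq V] [Fintype V]
    [DecidableEq ι] [Fintype ι] (M : ι → FinMatroid V) (P : ι → Finset V) (S : Finset V)
    (hind : ∀ i, (M i).Indep (P i)) (hdisj : ∀ i j, i ≠ j → Disjoint (P i) (P j))
    (hS : Finset.univ.biUnion P = S)
    (π : V → ι) (hπ : ∀ i, ∀ v ∈ P i, π v = i)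
    (j : ι) (vs : List V) (hne : vs ≠ []) (hnd : vs.Nodup)
    (hchain : List.Chain' (compAdj M P)
      (CVert.src :: (vs.map CVert.elt ++ [CVert.snk j])))
    (hshort : (⨅ i : ι, ddist (compAdj M P) CVert.src (CVert.snk i))
      = ((vs.length + 1 : ℕ) : ℕ∞)) :
    ∀ v ∈ vs,
      ddist (compAdj M P) CVert.src (CVert.elt v)
        < ddist (compAdj M (updatePartition P π vs hne j)) CVert.src (CVert.elt v) := by
  have hpos : 0 < vs.length := List.length_pos_iff.2 hne
  obtain ⟨cs, ce, ct⟩ := chain_facts _ j vs hne hchain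
  have hmemu := mem_update P π vs hne j
  have hcard := fun i hP => card_update P π vs hne hnd j i hP
  have hvw : ∀ v ∈ vs, ∃ a < vs.length, vs.getD a (vs.head hne) = v := by
    intro v hv
    obtain ⟨a, ha, h⟩ := List.mem_iff_getElem.1 hv
    exact ⟨a, ha, by rw [List.getD_eq_getElem _ _ ha, h]⟩
  set P' := updatePartition P π vs hne j with hP'
  generalize hw : (fun a => vs.getD a (vs.head hne)) = w at *
  have hwa : ∀ a, vs.getD a (vs.head hne) = w a := fun a => by rw [← hw]
  simp only [hwa] at *
  generalize vs.length = L at *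
  clear hw hwa hchain hP'
  -- edges of the path
  have hedge : ∀ a, a + 1 < L → w (a + 1) ∈ P (π (w (a + 1))) ∧
      ¬ (M (π (w (a + 1)))).Indep (insert (w a) (P (π (w (a + 1))))) ∧
      (M (π (w (a + 1)))).Indep (insert (w a) ((P (π (w (a + 1)))).erase (w (a + 1)))) := by
    intro a ha
    obtain ⟨i, h1, h2, h3⟩ := ce a ha
    have := hπ i _ h1
    subst this
    exact ⟨h1, h2, h3⟩
  have h0 : ∀ i, w 0 ∉ P i := by
    intro i hi
    exact cs (Finset.mem_biUnion.2 ⟨i, Finset.mem_univ _, hi⟩)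
  obtain ⟨ct1, ct2⟩ : w (L - 1) ∉ P j ∧ (M j).Indep (insert (w (L - 1)) (P j)) := ct
  have hmin : ∀ i n, reachIn (compAdj M P) n CVert.src (CVert.snk i) → L + 1 ≤ n := by
    intro i n h
    have h1 := ddist_le h
    have h2 := iInf_le (fun i : ι => ddist (compAdj M P) CVert.src (CVert.snk i)) i
    rw [hshort] at h2
    exact_mod_cast h2.trans h1
  have hreach : ∀ a < L, reachIn (compAdj M P) (a + 1) CVert.src (CVert.elt (w a)) := by
    intro a
    induction a with
    | zero => exact fun _ => ⟨_, cs, rfl⟩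
    | succ a ih => exact fun ha => reachIn_snoc (ih (by omega)) (ce a ha)
  have hext : ∀ d a n, a + d = L - 1 → reachIn (compAdj M P) n CVert.src (CVert.elt (w a)) →
      L + 1 ≤ n + d + 1 := by
    intro d
    induction d with
    | zero =>
      intro a n ha h
      have ha : a = L - 1 := ha
      subst ha
      exact hmin j _ (reachIn_snoc h (z := CVert.snk j) ⟨ct1, ct2⟩)
    | succ d ih =>
      intro a n ha h
      have := ih (a + 1) (n + 1) (by omega) (reachIn_snoc h (ce a (by omega)))
      omega
  set D : ℕ → V → Prop := fun m x =>
    ∃ n ≤ m, reachIn (compAdj M P) n CVert.src (CVert.elt x) with hDdef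
  have hDw : ∀ a < L, D (a + 1) (w a) := fun a ha => ⟨a + 1, le_rfl, hreach a ha⟩
  have hDw' : ∀ a < L, ∀ m, D m (w a) → a + 1 ≤ m := by
    rintro a ha m ⟨n, hn, h⟩
    have := hext (L - 1 - a) a n (by omega) h
    omega
  have hmono : ∀ m n x, m ≤ n → D m x → D n x := by
    rintro m n x hmn ⟨k, hk, h⟩
    exact ⟨k, hk.trans hmn, h⟩
  have hD : ∀ i, ∀ m v u, D m v → u ∈ P i → ¬ (M i).Indep (insert v (P i)) →
      (M i).Indep (insert v ((P i).erase u)) → D (m + 1) u := by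
    rintro i m v u ⟨n, hn, h⟩ h1 h2 h3
    exact ⟨n + 1, by omega, reachIn_snoc h (z := CVert.elt u) ⟨i, h1, h2, h3⟩⟩
  have hnon : ∀ i, ∀ x ∈ P i, (∀ a < L, w a ≠ x) → x ∈ P' i := by
    intro i x hx h
    rw [hmemu]
    exact Or.inl ⟨hx, fun ⟨a, ha, h', _⟩ => h _ ha h'⟩
  have hpath : ∀ i b, b + 1 < L → w (b + 1) ∈ P i → w b ∈ P' i ∧
      ¬ (M i).Indep (insert (w b) (P i)) ∧
      (M i).Indep (insert (w b) ((P i).erase (w (b + 1)))) := by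
    intro i b hb hwb
    have := hπ i _ hwb
    subst this
    refine ⟨?_, (hedge b hb).2⟩
    rw [hmemu]
    exact Or.inr (Or.inl ⟨b, hb, rfl, rfl⟩)
  have hlast : w (L - 1) ∈ P' j := by
    rw [hmemu]; exact Or.inr (Or.inr ⟨rfl, rfl⟩)
  have hw' : ∀ a < L, ∃ i, w a ∈ P' i := by
    intro a ha
    by_cases h : a + 1 < L
    · exact ⟨_, (hpath _ a h (hedge a h).1).1⟩
    · have : a = L - 1 := by omega
      exact ⟨j, this ▸ hlast⟩
  have hind' : ∀ i, (M i).Indep (P' i) := by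
    intro i
    obtain ⟨N, hE, hN⟩ := (M i).exists_matroid
    have c3 := core3 hE hN (hind i) (hnon i) (hpath i) (h0 i) (hD i) hDw hDw' hmono
    have hc := hcard i (fun a ha => (hedge a ha).1)
    by_cases hij : i = j
    · subst hij
      refine indep_of_span hN ct2 ?_ ?_
      · intro x hx
        rcases Finset.mem_insert.1 hx with rfl | hx
        · exact N.mem_closure_of_mem' hlast (by simp [hE])
        · exact c3 x hx
      · rw [Finset.card_insert_of_notMem ct1]
        simpa using hc
    · exact indep_of_span hN (hind i) c3 (by simpa [hij] using hc)
  have main : ∀ n x, reachIn (compAdj M P') n CVert.src (CVert.elt x) →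
      (n < L → D n x) ∧ ∀ a < L, w a = x → a + 2 ≤ n := by
    intro n
    induction n with
    | zero => intro x h; cases h
    | succ n ih =>
      intro x h
      by_cases hnL : L ≤ n
      · exact ⟨fun h => by omega, fun a ha _ => by omega⟩
      obtain ⟨y, hy, hyx⟩ := reachIn_last h
      cases y with
      | snk i => exact absurd hyx (by simp [compAdj])
      | src =>
        have hx : x ∉ Finset.univ.biUnion P' := hyx
        have hxw : ∀ a < L, w a ≠ x := by
          rintro a ha rfl
          obtain ⟨i, hi⟩ := hw' a ha
          exact hx (Finset.mem_biUnion.2 ⟨i, Finset.mem_univ _, hi⟩)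
        refine ⟨fun _ => ⟨1, by omega, _, ?_, rfl⟩, fun a ha h => absurd h (hxw a ha)⟩
        intro hxS
        obtain ⟨i, -, hi⟩ := Finset.mem_biUnion.1 hxS
        exact hx (Finset.mem_biUnion.2 ⟨i, Finset.mem_univ _, hnon i x hi hxw⟩)
      | elt v =>
        obtain ⟨i, hx, hdep, hin⟩ := hyx
        have hDv := (ih v hy).1 (by omega)
        obtain ⟨N, hE, hN⟩ := (M i).exists_matroid
        have hv : v ∈ P i ∨ ¬ (M i).Indep (insert v (P i)) := by
          by_contra hcon
          push Not at hcon
          obtain ⟨k, hk, hr⟩ := hDv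
          have := hmin i _ (reachIn_snoc hr (z := CVert.snk i) hcon)
          omega
        have := core5 hE hN (hind i) (hnon i) (hpath i) (h0 i) (hD i) hDw hDw' hmono (hind' i)
          n v x hDv hv hx hdep hin
        refine ⟨fun _ => this.1, fun a ha h => ?_⟩
        have := this.2 a ha h
        omega
  intro v hv
  obtain ⟨a, ha, rfl⟩ := hvw v hv
  refine lt_of_le_of_lt (ddist_le (hreach a ha)) (lt_of_lt_of_le ?_
    (le_ddist (n := a + 2) fun m hm => (main m _ hm).2 a ha rfl))
  exact_mod_cast Nat.lt_succ_self _
end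

section
/- Let M_1 = (V, I_1), …, M_k = (V, I_k) be k matroids over a common finite ground set V, and let S_1, …, S_k ⊆ V be pairwise disjoint sets with S_i ∈ I_i for all i ∈ [k] such that, for every i ∈ [k] and every v ∈ V \ (S_1 ∪ ⋯ ∪ S_i), S_i + v ∉ I_i. Then p̄ = |S_1 ∪ ⋯ ∪ S_k| is a 1/2-approximation of the maximum partitionable set size p, i.e., p̄ ≤ p ≤ 2·p̄. -/
/-- The greedy algorithm yields a 1/2-approximation of the maximum partitionable set
size: if `S₁, …, S_k` are disjoint independent sets such that for every `i` and every
`v ∉ S₁ ∪ ⋯ ∪ S_i`, `S_i + v` is dependent in `M_i`, then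
`p̄ ≤ p ≤ 2·p̄` where `p̄ = |S₁ ∪ ⋯ ∪ S_k|`. -/
theorem greedy_half_approximation {V : Type*} [DecidableEq V] [Fintype V]
    (k : ℕ) (M : Fin k → FinMatroid V) (P : Fin k → Finset V)
    (hind : ∀ i, (M i).Indep (P i))
    (hdisj : ∀ i j, i ≠ j → Disjoint (P i) (P j))
    (hmax : ∀ i : Fin k, ∀ v : V,
      v ∉ (Finset.univ.filter (fun j => j ≤ i)).biUnion P →
      ¬ (M i).Indep (insert v (P i))) :
    (Finset.univ.biUnion P).card
        ≤ sSup {n : ℕ | ∃ T : Finset V, Partitionable M T ∧ T.card = n} ∧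
      sSup {n : ℕ | ∃ T : Finset V, Partitionable M T ∧ T.card = n}
        ≤ 2 * (Finset.univ.biUnion P).card := by
  have hub : ∀ n ∈ {n : ℕ | ∃ T : Finset V, Partitionable M T ∧ T.card = n},
      n ≤ 2 * (Finset.univ.biUnion P).card := by
    rintro n ⟨T, ⟨Q, hQ, -, hT⟩, rfl⟩
    have hU : (Finset.univ.biUnion P).card = ∑ i, (P i).card :=
      Finset.card_biUnion (fun i _ j _ hij => hdisj i j hij)
    have key : ∀ i, (Q i \ Finset.univ.biUnion P).card ≤ (P i).card := by
      intro i
      by_contra hlt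
      obtain ⟨x, hx, hxi⟩ := (M i).indep_aug
        ((M i).indep_subset (hQ i) (Finset.sdiff_subset (t := Finset.univ.biUnion P)))
        (hind i) (not_le.mp hlt)
      rw [Finset.mem_sdiff, Finset.mem_sdiff] at hx
      refine hmax i x (fun hmem => hx.1.2 ?_) hxi
      exact Finset.biUnion_subset_biUnion_of_subset_left P (Finset.filter_subset _ _) hmem
    have hsub : T ⊆ Finset.univ.biUnion P ∪
        Finset.univ.biUnion (fun i => Q i \ Finset.univ.biUnion P) := by
      intro x hx
      rw [← hT, Finset.mem_biUnion] at hx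
      obtain ⟨i, hi, hxi⟩ := hx
      by_cases h : x ∈ Finset.univ.biUnion P
      · exact Finset.mem_union_left _ h
      · exact Finset.mem_union_right _
          (Finset.mem_biUnion.mpr ⟨i, hi, Finset.mem_sdiff.mpr ⟨hxi, h⟩⟩)
    have h1 := Finset.card_le_card hsub
    have h2 := Finset.card_union_le (Finset.univ.biUnion P)
      (Finset.univ.biUnion (fun i => Q i \ Finset.univ.biUnion P))
    have h3 : (Finset.univ.biUnion (fun i => Q i \ Finset.univ.biUnion P)).card ≤
        ∑ i, (Q i \ Finset.univ.biUnion P).card := Finset.card_biUnion_le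
    have h4 : ∑ i, (Q i \ Finset.univ.biUnion P).card ≤ ∑ i, (P i).card :=
      Finset.sum_le_sum (fun i _ => key i)
    omega
  have hmem : (Finset.univ.biUnion P).card ∈
      {n : ℕ | ∃ T : Finset V, Partitionable M T ∧ T.card = n} :=
    ⟨_, ⟨P, hind, hdisj, rfl⟩, rfl⟩
  exact ⟨le_csSup ⟨_, hub⟩ hmem, csSup_le ⟨_, hmem⟩ hub⟩
end
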